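/- Let t ≥ 2 be an integer and let G be a regular non-complete graph on n vertices which is a t-expander, i.e., there do not exist disjoint sets X, Y ⊆ V with |X| = |Y| = t such that no vertex of X is adjacent in G to any vertex of Y. Then box(G) ≥ n/(4(t − 1)). -/

import Mathlib

/-!
Let `d ≥ 1` be the degree of the regular complement `Gᶜ`. If `I ⊇ G` is an interval graph with
intervals `[a v, b v]`, cut the line at the `t`-th smallest right endpoint `p`
(if `n < t`, all vertices together already form a small enough cover). Fewer than `t` vertices
satisfy `b u < p`, and fewer than `t` satisfy `p < a v`, since the latter are non-adjacent in `G`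
to the `t` vertices with the smallest right endpoints. Any non-edge of `I`
has an interval of one of these two kinds, so `Iᶜ` has a vertex cover of size at most `2 (t - 1)`
(`IsIntervalGraph.exists_cover`).

If `G` is the intersection of `k` interval graphs, the union of these covers is a vertex cover
`C` of `Gᶜ` with `|C| ≤ 2 (t - 1) k`. The vertices outside `C` are independent in `Gᶜ`, so counting
the edges of `Gᶜ` between `C` and its complement gives `(n - |C|) d ≤ |C| d`, that is `n ≤ 2 |C|`
(`card_le_two_mul_cover`). Since `boxicity` is an `sInf` of naturals, it must also be shown that
some such `k` exists (`exists_interval_representation`).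
-/

/-- `I` is an interval graph: it can be represented by assigning to each vertex
a closed real interval so that two distinct vertices are adjacent in `I`
iff their intervals intersect. -/
def IsIntervalGraph {V : Type*} (I : SimpleGraph V) : Prop :=
  ∃ f : V → Set ℝ, (∀ v, ∃ a b : ℝ, a ≤ b ∧ f v = Set.Icc a b) ∧
    ∀ u v : V, u ≠ v → (I.Adj u v ↔ (f u ∩ f v).Nonempty)

/-- The boxicity of `G`: the least `k` such that `G` is the intersection
(infimum) of `k` interval graphs on the same vertex set. -/
noncomputable def boxicity {V : Type*} (G : SimpleGraph V) : ℕ :=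
  sInf {k : ℕ | ∃ I : Fin k → SimpleGraph V,
    (∀ i, IsIntervalGraph (I i)) ∧ G = ⨅ i, I i}

/-- The number of edges of `G`. -/
noncomputable def numEdges {V : Type*} (G : SimpleGraph V) : ℕ :=
  G.edgeSet.ncard

/-- Every finite graph is an intersection of interval graphs: for each vertex `v` use the graph in
which `v`, its neighbours and its non-neighbours get `[0,0]`, `[0,1]` and `[1,1]`. This makes the
set in the definition of `boxicity` nonempty, so that its infimum is attained. -/
lemma exists_interval_representation {V : Type*} [Fintype V] (G : SimpleGraph V) :
    ∃ k : ℕ, ∃ I : Fin k → SimpleGraph V,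
      (∀ i, IsIntervalGraph (I i)) ∧ G = ⨅ i, I i := by
  classical
  let l : V → V → ℝ := fun v w => if w = v ∨ G.Adj v w then 0 else 1
  let r : V → V → ℝ := fun v w => if w = v then 0 else 1
  have hlr : ∀ v w, l v w ≤ r v w := by
    intro v w
    simp only [l, r]
    split_ifs <;> simp_all
  let J : V → SimpleGraph V := fun v =>
    { Adj := fun x y => x ≠ y ∧ (Set.Icc (l v x) (r v x) ∩ Set.Icc (l v y) (r v y)).Nonempty
      symm := ⟨fun x y h => ⟨h.1.symm, by rw [Set.inter_comm]; exact h.2⟩⟩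
      loopless := ⟨fun x h => h.1 rfl⟩ }
  refine ⟨Fintype.card V, fun i => J ((Fintype.equivFin V).symm i), fun i => ?_, ?_⟩
  · let v₀ := (Fintype.equivFin V).symm i
    refine ⟨fun w => Set.Icc (l v₀ w) (r v₀ w), fun w => ⟨_, _, hlr _ w, rfl⟩, fun u v huv => ?_⟩
    exact ⟨fun h => h.2, fun h => ⟨huv, h⟩⟩
  · ext x y
    rw [SimpleGraph.iInf_adj]
    constructor
    · intro h
      refine ⟨fun i => ⟨h.ne, ?_⟩, h.ne⟩
      generalize (Fintype.equivFin V).symm i = v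
      -- the common point is `0` when `v` is one of the two vertices and `1` otherwise
      by_cases hx : x = v
      · subst hx
        exact ⟨0, by simp [l, r], by simp [l, h], by simp only [r]; split_ifs <;> norm_num⟩
      · by_cases hy : y = v
        · subst hy
          exact ⟨0, ⟨by simp [l, h.symm], by simp only [r]; split_ifs <;> norm_num⟩,
            by simp [l, r]⟩
        · exact ⟨1, ⟨by simp only [l]; split_ifs <;> norm_num, by simp [r, hx]⟩,
            by simp only [l]; split_ifs <;> norm_num, by simp [r, hy]⟩
    · rintro ⟨h, hne⟩
      by_contra hadj
      obtain ⟨-, z, hz1, hz2⟩ := h (Fintype.equivFin V x)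
      simp [l, r, hne.symm, hadj] at hz1 hz2
      linarith

/-- The non-edges of an interval supergraph of a `t`-expander are covered by `2 (t - 1)`
vertices. -/
lemma IsIntervalGraph.exists_cover {V : Type*} [Fintype V] {G I : SimpleGraph V} {t : ℕ}
    (ht : 0 < t) (hI : IsIntervalGraph I) (hGI : G ≤ I)
    (hexp : ¬∃ X Y : Finset V, Disjoint X Y ∧ X.card = t ∧ Y.card = t ∧
      ∀ x ∈ X, ∀ y ∈ Y, ¬G.Adj x y) :
    ∃ C : Finset V, C.card ≤ 2 * (t - 1) ∧ ∀ u v, u ≠ v → ¬I.Adj u v → u ∈ C ∨ v ∈ C := by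
  classical
  obtain ⟨f, hf, hadj⟩ := hI
  choose a b hab hfab using hf
  have hsep : ∀ u v, u ≠ v → ¬I.Adj u v → b u < a v ∨ b v < a u := by
    intro u v huv h
    by_contra! hc
    refine h ((hadj u v huv).2 ?_)
    rw [hfab, hfab, Set.Icc_inter_Icc, Set.nonempty_Icc]
    exact sup_le (le_inf (hab u) hc.2) (le_inf hc.1 (hab v))
  have hnadj : ∀ u v, b u < a v → ¬G.Adj u v := by
    intro u v h hG
    obtain ⟨z, hz1, hz2⟩ := (hadj u v hG.ne).1 (hGI hG)
    rw [hfab] at hz1 hz2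
    linarith [hz1.2, hz2.1]
  by_cases hcard : Fintype.card V < t
  · exact ⟨Finset.univ, by rw [Finset.card_univ]; omega, by simp⟩
  -- `b w` for the `b`-minimal `w ∈ S` is the `t`-th smallest right endpoint
  let S : Finset V := {w | t ≤ (Finset.univ.filter fun u => b u ≤ b w).card}
  have hS : S.Nonempty := by
    have : Nonempty V := Fintype.card_pos_iff.1 (by omega)
    obtain ⟨w, -, hw⟩ := Finset.exists_max_image Finset.univ b Finset.univ_nonempty
    refine ⟨w, ?_⟩
    simp only [S, Finset.mem_filter, Finset.mem_univ, true_and]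
    rw [Finset.filter_true_of_mem hw, Finset.card_univ]
    omega
  obtain ⟨w, hwS, hw⟩ := Finset.exists_min_image S b hS
  let A : Finset V := {u | b u < b w}
  let B : Finset V := {v | b w < a v}
  have hA : A.card ≤ t - 1 := by
    by_contra! hc
    obtain ⟨u, huA, hu⟩ := Finset.exists_max_image A b (Finset.card_pos.1 (by omega))
    have huS : u ∈ S := by
      simp only [S, Finset.mem_filter, Finset.mem_univ, true_and]
      have : A.card ≤ (Finset.univ.filter fun x => b x ≤ b u).card :=
        Finset.card_le_card fun x hx => by simpa using hu x hx
      omega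
    have h1 := hw u huS
    have h2 : b u < b w := by simpa [A] using huA
    linarith
  have hB : B.card ≤ t - 1 := by
    by_contra! hc
    obtain ⟨X, hX, hXc⟩ := Finset.exists_subset_card_eq (Finset.mem_filter.1 hwS).2
    obtain ⟨Y, hY, hYc⟩ := Finset.exists_subset_card_eq (show t ≤ B.card by omega)
    have hX' : ∀ x ∈ X, b x ≤ b w := fun x hx => by simpa using hX hx
    have hY' : ∀ y ∈ Y, b w < a y := fun y hy => by simpa [B] using hY hy
    refine hexp ⟨X, Y, Finset.disjoint_left.2 fun x hx hy => ?_, hXc, hYc, fun x hx y hy =>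
      hnadj x y ((hX' x hx).trans_lt (hY' y hy))⟩
    linarith [hX' x hx, hY' x hy, hab x]
  have key : ∀ u v, b u < a v → u ∈ A ∨ v ∈ B := by
    intro u v h
    simp only [A, B, Finset.mem_filter, Finset.mem_univ, true_and]
    by_contra! hc
    linarith [hc.1, hc.2]
  refine ⟨A ∪ B, (Finset.card_union_le A B).trans (by omega), fun u v huv h => ?_⟩
  simp only [Finset.mem_union]
  rcases hsep u v huv h with h | h
  · rcases key u v h with h | h <;> tauto
  · rcases key v u h with h | h <;> tauto

/-- A vertex cover of a regular graph of positive degree has at least half of the vertices. -/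
lemma card_le_two_mul_cover {V : Type*} [Fintype V] {H : SimpleGraph V} [DecidableRel H.Adj]
    {d : ℕ} (hH : H.IsRegularOfDegree d) (hd : 0 < d) (C : Finset V)
    (hC : ∀ u v, H.Adj u v → u ∈ C ∨ v ∈ C) : Fintype.card V ≤ 2 * C.card := by
  classical
  have h : Cᶜ.card * d ≤ C.card * d := by
    refine Finset.card_mul_le_card_mul H.Adj (fun u hu => ?_) (fun v _ => ?_)
    · rw [← hH u, ← SimpleGraph.card_neighborFinset_eq_degree]
      refine Finset.card_le_card fun v hv => ?_
      rw [SimpleGraph.mem_neighborFinset] at hv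
      exact Finset.mem_bipartiteAbove _ |>.2
        ⟨(hC u v hv).resolve_left (Finset.mem_compl.1 hu), hv⟩
    · rw [← hH v, ← SimpleGraph.card_neighborFinset_eq_degree]
      refine Finset.card_le_card fun u hu => ?_
      rw [SimpleGraph.mem_neighborFinset]
      exact ((Finset.mem_bipartiteBelow _).1 hu).2.symm
  have h' := Nat.le_of_mul_le_mul_right h hd
  rw [Finset.card_compl] at h'
  omega

theorem box_lower_bound_regular_t_expander {V : Type*} [Fintype V]
    (G : SimpleGraph V) [DecidableRel G.Adj] (t : ℕ) (ht : 2 ≤ t)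
    (hreg : ∃ k : ℕ, G.IsRegularOfDegree k) (hG : G ≠ ⊤)
    (hexp : ¬∃ X Y : Finset V, Disjoint X Y ∧ X.card = t ∧ Y.card = t ∧
      ∀ x ∈ X, ∀ y ∈ Y, ¬G.Adj x y) :
    (boxicity G : ℝ) ≥ (Fintype.card V : ℝ) / (4 * ((t : ℝ) - 1)) := by
  classical
  obtain ⟨k, hk⟩ := hreg
  have hmem : boxicity G ∈ {k : ℕ | ∃ I : Fin k → SimpleGraph V,
      (∀ i, IsIntervalGraph (I i)) ∧ G = ⨅ i, I i} :=
    Nat.sInf_mem (exists_interval_representation G)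
  obtain ⟨I, hI, hGI⟩ := hmem
  have hle : ∀ i, G ≤ I i := fun i => hGI.le.trans (iInf_le I i)
  choose C hCcard hC using fun i => (hI i).exists_cover (by omega) (hle i) hexp
  have hcompl := hk.compl
  have hd : 0 < Fintype.card V - 1 - k := by
    by_contra hd
    refine hG (top_le_iff.1 fun u v huv => ?_)
    by_contra hadj
    have h1 : 0 < Gᶜ.degree u :=
      (Gᶜ.degree_pos_iff_exists_adj u).2 ⟨v, (SimpleGraph.compl_adj G u v).2 ⟨huv, hadj⟩⟩
    rw [hcompl u] at h1
    exact hd h1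
  have hn := card_le_two_mul_cover hcompl hd (Finset.univ.biUnion C) (by
    intro u v huv
    obtain ⟨hne, hadj⟩ := (SimpleGraph.compl_adj G u v).1 huv
    have : ∃ i, ¬(I i).Adj u v := by
      by_contra! hall
      apply hadj
      rw [hGI, SimpleGraph.iInf_adj]
      exact ⟨hall, hne⟩
    obtain ⟨i, hi⟩ := this
    simp only [Finset.mem_biUnion, Finset.mem_univ, true_and]
    exact (hC i u v hne hi).imp (fun h => ⟨i, h⟩) (fun h => ⟨i, h⟩))
  have hU : (Finset.univ.biUnion C).card ≤ boxicity G * (2 * (t - 1)) := by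
    simpa using Finset.card_biUnion_le_card_mul Finset.univ C _ fun i _ => hCcard i
  have hfin : Fintype.card V ≤ boxicity G * (4 * (t - 1)) := by
    calc _ ≤ 2 * (boxicity G * (2 * (t - 1))) := hn.trans (Nat.mul_le_mul_left 2 hU)
      _ = _ := by ring
  have ht' : (2 : ℝ) ≤ t := by exact_mod_cast ht
  rw [ge_iff_le, div_le_iff₀ (by linarith)]
  have : (Fintype.card V : ℝ) ≤ ((boxicity G * (4 * (t - 1)) : ℕ) : ℝ) := by exact_mod_cast hfin
  rwa [Nat.cast_mul, Nat.cast_mul, Nat.cast_sub (by omega), Nat.cast_one, Nat.cast_ofNat] at this
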